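/- Let t ∈ (0,1), φ_t(z) = (t − z)/(1 − tz), and α ≥ 1/2. Then for all sufficiently large n, ‖φ_t^n‖_{A²_α} / ‖z^n‖_{A²_α} ≥ (1/2)·‖(φ_t')^α‖_{H²}, where (φ_t')^α(z) = (1 − t²)^α(1 − tz)^{−2α} (principal branch). -/

import Mathlib

noncomputable section

open Complex Filter Topology

/-- The sequence-space (ℓ²) model of a weighted Hardy space `H²_β`.
An element `a : H2` represents the analytic function whose `k`-th Taylor
coefficient is `a k / β k` (so that `‖a‖` is exactly the `H²_β`-norm). -/
abbrev H2 : Type := lp (fun _ : ℕ => ℂ) 2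

/-- The direct sum (ℓ²-sense) of `m` copies of `H2`. -/
abbrev Hm (m : ℕ) : Type := PiLp 2 (fun _ : Fin m => H2)

/-- The open unit disk 𝔻 ⊆ ℂ. -/
def unitDisk : Set ℂ := Metric.ball 0 1

/-- `β_0 = 1` and `β_k = ∏_{j=1}^k w_j`. -/
def betaSeq (w : ℕ → ℝ) (k : ℕ) : ℝ := ∏ j ∈ Finset.Icc 1 k, w j

/-- The analytic function on 𝔻 represented by the vector `a` in the model of `H²_β`:
`f(z) = ∑_k (a k / β k) z^k`. -/
def repFun (β : ℕ → ℝ) (a : H2) (z : ℂ) : ℂ := ∑' k, (a k / (β k : ℂ)) * z ^ k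

/-- `T` is (the ℓ²-model of) the multiplication operator `M_g` on `H²_β`.
Existence of such a `T` says precisely that `M_g` is bounded on `H²_β`. -/
def RepMul (β : ℕ → ℝ) (g : ℂ → ℂ) (T : H2 →L[ℂ] H2) : Prop :=
  ∀ a : H2, ∀ z ∈ unitDisk, repFun β (T a) z = g z * repFun β a z

/-- `T` is (the ℓ²-model of) the composition operator `C_ψ` on `H²_β`.
Existence of such a `T` says precisely that `C_ψ` is bounded on `H²_β`. -/
def RepComp (β : ℕ → ℝ) (ψ : ℂ → ℂ) (T : H2 →L[ℂ] H2) : Prop :=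
  ∀ a : H2, ∀ z ∈ unitDisk, repFun β (T a) z = repFun β a (ψ z)

/-- The Möbius factor `φ_{z₀}(z) = (z₀ - z)/(1 - conj z₀ · z)`. -/
def mobius (z₀ z : ℂ) : ℂ := (z₀ - z) / (1 - (starRingEnd ℂ) z₀ * z)

/-- `φ` belongs to `Aut(𝔻)`, i.e. `φ(z) = e^{iθ}(z₀ - z)/(1 - conj z₀ · z)`. -/
def IsDiskAut (φ : ℂ → ℂ) : Prop :=
  ∃ (θ : ℝ) (z₀ : ℂ), z₀ ∈ unitDisk ∧
    ∀ z, φ z = Complex.exp (θ * Complex.I) * mobius z₀ z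

/-- `B` is a finite Blaschke product of order `m`. -/
def IsBlaschke (m : ℕ) (B : ℂ → ℂ) : Prop :=
  ∃ (θ : ℝ) (zs : Fin m → ℂ), (∀ j, zs j ∈ unitDisk) ∧
    ∀ z, B z = Complex.exp (θ * Complex.I) * ∏ j, mobius (zs j) z

/-- `w` is a positive weight sequence tending to `1` such that the weighted Hardy
space `H²_β` is of polynomial growth: `sup_k (k+1)|w_k - 1| < ∞`. -/
def PolyGrowth (w : ℕ → ℝ) : Prop :=
  (∀ k, 1 ≤ k → 0 < w k) ∧ Tendsto w atTop (nhds 1) ∧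
    ∃ M : ℝ, ∀ k : ℕ, 1 ≤ k → ((k : ℝ) + 1) * |w k - 1| ≤ M

/-- `f` is analytic on an open neighbourhood of the closed unit disk. -/
def AnalyticOnClosedDisk (f : ℂ → ℂ) : Prop :=
  ∃ U : Set ℂ, IsOpen U ∧ Metric.closedBall (0:ℂ) 1 ⊆ U ∧ AnalyticOnNhd ℂ f U

/-- The `k`-th Taylor coefficient of `f` at `0`. -/
def taylorCoef (f : ℂ → ℂ) (k : ℕ) : ℂ := iteratedDeriv k f 0 / (Nat.factorial k : ℂ)

/-- The squared norm of `f` in the classical Hardy space `H²`. -/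
def hardyNormSq (f : ℂ → ℂ) : ℝ := ∑' k, ‖taylorCoef f k‖ ^ 2

/-- The squared norm of `f` in the weighted Hardy space with weights `γ`. -/
def wNormSq (γ : ℕ → ℝ) (f : ℂ → ℂ) : ℝ := ∑' k, ‖taylorCoef f k‖ ^ 2 * γ k ^ 2

/-- The weights `β^{(α)}_k = ∏_{j=1}^k √((j+1)/(j+2α+1))` of the weighted Bergman
space `A²_α`. -/
def bergBeta (α : ℝ) (k : ℕ) : ℝ :=
  ∏ j ∈ Finset.Icc 1 k, Real.sqrt (((j : ℝ) + 1) / ((j : ℝ) + 2 * α + 1))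

/-!
Write `φ = mobius w` and `D = |φ'|`. Up to a Beta function factor, `‖f‖²` in `A²_α` is the integral
over `s ∈ (0, 1)` of `s ^ (2α - 1) (1 - s)` times the mean of `|f|²` over the circle of radius
`√(1 - s)`. For `f = φ ^ n` the Schwarz–Pick identity `1 - |φ(z)|² = (1 - |z|²) D(z)` shows that
the mass concentrates at `s = u / n`, where `|φ ^ n|²` is close to `exp (-u D)`; hence
`‖φ ^ n‖² / ‖z ^ n‖²` tends to the mean of `D ^ (-2α)` over the unit circle. The involution `φ` has
`D ∘ φ = 1 / D` there, so changing variables turns this mean into that of `D ^ (2α + 1)`. It exceeds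
the mean of `D ^ (2α)`, which is `‖(φ')^α‖²` in `H²`, because `(D ^ (2α) - 1) (D - 1) ≥ 0` and `D`
has mean `1`.
-/

open MeasureTheory Metric
open scoped Interval Real

theorem tendsto_circleAverage_of_norm_le {E : Type*} [NormedAddCommGroup E] [NormedSpace ℝ E]
    {F : ℕ → ℂ → E} {f : ℂ → E} {c : ℂ} {R C : ℝ}
    (hF : ∀ n, CircleIntegrable (F n) c R) (hC : ∀ n, ∀ z ∈ sphere c |R|, ‖F n z‖ ≤ C)
    (hf : ∀ z ∈ sphere c |R|, Tendsto (F · z) atTop (𝓝 (f z))) :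
    Tendsto (fun n => Real.circleAverage (F n) c R) atTop (𝓝 (Real.circleAverage f c R)) := by
  have h_mem (θ : ℝ) : circleMap c R θ ∈ sphere c |R| := circleMap_mem_sphere' c R θ
  refine Tendsto.const_smul ?_ _
  exact intervalIntegral.tendsto_integral_filter_of_dominated_convergence (fun _ => C)
    (.of_forall fun n => (hF n).aestronglyMeasurable_restrict_uIoc)
    (.of_forall fun n => .of_forall fun θ _ => hC n _ (h_mem θ))
    intervalIntegrable_const (.of_forall fun θ _ => hf _ (h_mem θ))

theorem sum_norm_sq_eq_circleAverage (a : ℕ → ℂ) (n : ℕ) :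
    ∑ k ∈ Finset.range n, ‖a k‖ ^ 2 =
      Real.circleAverage (fun z => ‖∑ k ∈ Finset.range n, a k * z ^ k‖ ^ 2) 0 1 := by
  let p : Polynomial ℂ := ∑ k ∈ Finset.range n, Polynomial.monomial k (a k)
  have h_coeff (k : ℕ) : p.coeff k = if k < n then a k else 0 := by
    simp [p, Polynomial.finsetSum_coeff, Polynomial.coeff_monomial]
  have h_eval (z : ℂ) : p.eval z = ∑ k ∈ Finset.range n, a k * z ^ k := by
    simp [p, Polynomial.eval_finsetSum]
  have h_supp : p.support ⊆ Finset.range n := fun k hk => by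
    by_contra hkn
    simp_all
  calc ∑ k ∈ Finset.range n, ‖a k‖ ^ 2 = ∑ k ∈ Finset.range n, ‖p.coeff k‖ ^ 2 :=
        Finset.sum_congr rfl fun k hk => by rw [h_coeff, if_pos (Finset.mem_range.1 hk)]
    _ = ∑ k ∈ p.support, ‖p.coeff k‖ ^ 2 :=
        (Finset.sum_subset h_supp fun k _ hk => by
          simp [Polynomial.notMem_support_iff.1 hk]).symm
    _ = _ := by simp only [p.sum_sq_norm_coeff_eq_circleAverage, h_eval]

theorem hasSum_norm_sq_of_hasSum_mul_pow {a : ℕ → ℂ} {F : ℂ → ℂ} (ha : Summable (‖a ·‖))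
    (hF : ∀ z ∈ sphere (0 : ℂ) 1, HasSum (fun k => a k * z ^ k) (F z)) :
    HasSum (fun k => ‖a k‖ ^ 2) (Real.circleAverage (fun z => ‖F z‖ ^ 2) 0 1) := by
  rw [hasSum_iff_tendsto_nat_of_nonneg fun k => by positivity]
  simp only [sum_norm_sq_eq_circleAverage]
  refine tendsto_circleAverage_of_norm_le (C := (∑' k, ‖a k‖) ^ 2)
    (fun n => ContinuousOn.circleIntegrable' (by fun_prop)) (fun n z hz => ?_) fun z hz => ?_
  · have hz1 : ‖z‖ = 1 := by simpa using hz
    rw [norm_pow, norm_norm]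
    gcongr
    calc ‖∑ k ∈ Finset.range n, a k * z ^ k‖ ≤ ∑ k ∈ Finset.range n, ‖a k * z ^ k‖ :=
          norm_sum_le _ _
      _ = ∑ k ∈ Finset.range n, ‖a k‖ := by simp [hz1]
      _ ≤ ∑' k, ‖a k‖ := ha.sum_le_tsum _ fun _ _ => norm_nonneg _
  · rw [abs_one] at hz
    exact ((hF z hz).tendsto_sum_nat.norm).pow 2

namespace AnalyticOnClosedDisk

theorem exists_differentiableOn_ball {f : ℂ → ℂ} (hf : AnalyticOnClosedDisk f) :
    ∃ R > 1, DifferentiableOn ℂ f (ball 0 R) := by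
  obtain ⟨U, hU, hsub, hfU⟩ := hf
  obtain ⟨δ, hδ, hthick⟩ :=
    (isCompact_closedBall (0 : ℂ) 1).exists_thickening_subset_open hU hsub
  rw [thickening_closedBall hδ zero_le_one] at hthick
  exact ⟨δ + 1, by linarith, hfU.differentiableOn.mono hthick⟩

theorem hasSum_taylorCoef_mul_pow {f : ℂ → ℂ} (hf : AnalyticOnClosedDisk f) {z : ℂ}
    (hz : ‖z‖ ≤ 1) : HasSum (fun k => taylorCoef f k * z ^ k) (f z) := by
  obtain ⟨R, hR, hfR⟩ := hf.exists_differentiableOn_ball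
  have hz_mem : z ∈ ball (0 : ℂ) R := by simpa using hz.trans_lt hR
  refine (Complex.hasSum_taylorSeries_on_ball hfR hz_mem).congr_fun fun k => ?_
  simp only [taylorCoef, sub_zero, smul_eq_mul]
  ring

theorem summable_norm_taylorCoef {f : ℂ → ℂ} (hf : AnalyticOnClosedDisk f) :
    Summable fun k => ‖taylorCoef f k‖ := by
  simpa using (hf.hasSum_taylorCoef_mul_pow (z := 1) (by simp)).summable.norm

theorem hasSum_norm_taylorCoef_sq_mul_pow {f : ℂ → ℂ} (hf : AnalyticOnClosedDisk f) {r : ℝ}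
    (hr : |r| ≤ 1) : HasSum (fun k => ‖taylorCoef f k‖ ^ 2 * (r ^ 2) ^ k)
      (Real.circleAverage (fun z => ‖f z‖ ^ 2) 0 r) := by
  have h_term (k : ℕ) : ‖taylorCoef f k * r ^ k‖ ^ 2 = ‖taylorCoef f k‖ ^ 2 * (r ^ 2) ^ k := by
    rw [norm_mul, norm_pow, Complex.norm_real, mul_pow, ← pow_mul, mul_comm k 2, pow_mul,
      Real.norm_eq_abs, sq_abs]
  rw [Real.circleAverage_eq_circleAverage_zero_one]
  simp_rw [← h_term]
  refine hasSum_norm_sq_of_hasSum_mul_pow ?_ fun z hz => ?_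
  · refine hf.summable_norm_taylorCoef.of_nonneg_of_le (fun _ => norm_nonneg _) fun k => ?_
    rw [norm_mul, norm_pow, Complex.norm_real]
    exact mul_le_of_le_one_right (norm_nonneg _) (pow_le_one₀ (norm_nonneg _) hr)
  · have hrz : ‖(r : ℂ) * z‖ ≤ 1 := by simpa [mem_sphere_zero_iff_norm.1 hz] using hr
    simpa [mul_pow, mul_assoc] using hf.hasSum_taylorCoef_mul_pow hrz

theorem hardyNormSq_eq_circleAverage {f : ℂ → ℂ} (hf : AnalyticOnClosedDisk f) :
    hardyNormSq f = Real.circleAverage (fun z => ‖f z‖ ^ 2) 0 1 := by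
  simpa [hardyNormSq] using (hf.hasSum_norm_taylorCoef_sq_mul_pow (r := 1) (by simp)).tsum_eq

end AnalyticOnClosedDisk

open ProbabilityTheory (beta beta_pos)

theorem intervalIntegrable_rpow_mul_of_continuousOn {b : ℝ} (hb : 0 < b) {h : ℝ → ℝ}
    (hh : ContinuousOn h (Set.Icc 0 1)) :
    IntervalIntegrable (fun s => s ^ (b - 1) * h s) volume 0 1 :=
  (intervalIntegral.intervalIntegrable_rpow' (by linarith)).mul_continuousOn
    (by rwa [Set.uIcc_of_le zero_le_one])

theorem integral_rpow_mul_one_sub_rpow {a b : ℝ} (ha : 0 < a) (hb : 0 < b) :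
    ∫ s in (0 : ℝ)..1, s ^ (a - 1) * (1 - s) ^ (b - 1) = beta a b := by
  rw [ProbabilityTheory.beta_eq_betaIntegralReal a b ha hb, Complex.betaIntegral,
    intervalIntegral.integral_congr (g := fun s : ℝ =>
      ((s ^ (a - 1) * (1 - s) ^ (b - 1) : ℝ) : ℂ)) fun s hs => ?_,
    intervalIntegral.integral_ofReal, Complex.ofReal_re]
  rw [Set.uIcc_of_le zero_le_one] at hs
  push_cast [Complex.ofReal_cpow hs.1, Complex.ofReal_cpow (sub_nonneg.2 hs.2)]
  rfl

theorem integral_rpow_mul_one_sub_pow {b : ℝ} (hb : 0 < b) (k : ℕ) :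
    ∫ s in (0 : ℝ)..1, s ^ (b - 1) * (1 - s) ^ k = beta b (k + 1) := by
  rw [← integral_rpow_mul_one_sub_rpow hb (by positivity)]
  simp

theorem beta_add_one_mul {a b : ℝ} (hb : b ≠ 0) (hab : a + b ≠ 0) :
    beta a (b + 1) * (a + b) = beta a b * b := by
  rw [beta, beta, Real.Gamma_add_one hb, ← add_assoc, Real.Gamma_add_one hab]
  field_simp

theorem bergBeta_pos {α : ℝ} (hα : 0 ≤ α) (k : ℕ) : 0 < bergBeta α k :=
  Finset.prod_pos fun j _ => by positivity

theorem bergBeta_succ_sq {α : ℝ} (hα : 0 ≤ α) (k : ℕ) :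
    bergBeta α (k + 1) ^ 2 = bergBeta α k ^ 2 * ((k + 2) / (2 * α + (k + 2))) := by
  rw [bergBeta, Finset.prod_Icc_succ_top (by lia), ← bergBeta, mul_pow,
    Real.sq_sqrt (by positivity)]
  push_cast
  ring

theorem bergBeta_sq_mul_beta {α : ℝ} (hα : 0 < α) (k : ℕ) :
    bergBeta α k ^ 2 * beta (2 * α) 2 = beta (2 * α) (k + 2) := by
  induction k with
  | zero => simp [bergBeta]
  | succ k ih =>
    have h_rec := beta_add_one_mul (a := 2 * α) (b := k + 2) (by positivity) (by positivity)
    rw [bergBeta_succ_sq hα.le, mul_right_comm, ih, Nat.cast_succ, add_right_comm]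
    field_simp
    linarith

theorem AnalyticOnClosedDisk.beta_mul_wNormSq_bergBeta {f : ℂ → ℂ} (hf : AnalyticOnClosedDisk f)
    {α : ℝ} (hα : 0 < α) :
    beta (2 * α) 2 * wNormSq (bergBeta α) f = ∫ s in (0 : ℝ)..1,
      s ^ (2 * α - 1) * ((1 - s) * Real.circleAverage (fun z => ‖f z‖ ^ 2) 0 √(1 - s)) := by
  have hb : 0 < 2 * α := by positivity
  have h_coeff (k : ℕ) : ∫ s in (0 : ℝ)..1, ‖taylorCoef f k‖ ^ 2 *
      (s ^ (2 * α - 1) * (1 - s) ^ (k + 1)) =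
      beta (2 * α) 2 * (‖taylorCoef f k‖ ^ 2 * bergBeta α k ^ 2) := by
    rw [intervalIntegral.integral_const_mul, integral_rpow_mul_one_sub_pow hb, Nat.cast_succ,
      add_assoc, one_add_one_eq_two, ← bergBeta_sq_mul_beta hα]
    ring
  have h_summable : Summable fun k => ‖taylorCoef f k‖ ^ 2 := by
    simpa using (hf.hasSum_norm_taylorCoef_sq_mul_pow (r := 1) (by simp)).summable
  rw [wNormSq, ← tsum_mul_left]
  simp_rw [← h_coeff]
  refine (intervalIntegral.hasSum_integral_of_dominated_convergence
    (fun k s => ‖taylorCoef f k‖ ^ 2 * s ^ (2 * α - 1)) (fun k => ?_)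
    (fun k => .of_forall fun s hs => ?_) (.of_forall fun s _ => h_summable.mul_right _) ?_
    (.of_forall fun s hs => ?_)).tsum_eq
  · exact ((intervalIntegrable_rpow_mul_of_continuousOn hb (by fun_prop)).const_mul
      _).aestronglyMeasurable_restrict_uIoc
  · rw [Set.uIoc_of_le zero_le_one] at hs
    have hs0 : 0 < s := hs.1
    have hs1 : 0 ≤ 1 - s := sub_nonneg.2 hs.2
    rw [Real.norm_of_nonneg (by positivity)]
    gcongr
    exact mul_le_of_le_one_right (by positivity) (pow_le_one₀ hs1 (by linarith))
  · simp_rw [tsum_mul_right]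
    exact (intervalIntegral.intervalIntegrable_rpow' (by linarith)).const_mul _
  · rw [Set.uIoc_of_le zero_le_one] at hs
    have hs1 : 0 ≤ 1 - s := sub_nonneg.2 hs.2
    have h_sum := hf.hasSum_norm_taylorCoef_sq_mul_pow (r := √(1 - s)) <| by
      rw [abs_of_nonneg (Real.sqrt_nonneg _)]
      exact Real.sqrt_le_one.2 (by linarith [hs.1])
    rw [Real.sq_sqrt hs1] at h_sum
    refine ((h_sum.mul_left (1 - s)).mul_left (s ^ (2 * α - 1))).congr_fun fun k => ?_
    ring

theorem rpow_mul_integral_rpow_mul {b x : ℝ} (hx : 0 < x) (h : ℝ → ℝ) :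
    x ^ b * ∫ s in (0 : ℝ)..1, s ^ (b - 1) * h s =
      ∫ u in Set.Ioi 0, (Set.Ioc 0 x).indicator (fun u => u ^ (b - 1) * h (u / x)) u := by
  have h_scale : x * ∫ s in (0 : ℝ)..1, s ^ (b - 1) * h s =
      ∫ u in (0 : ℝ)..x, (u / x) ^ (b - 1) * h (u / x) := by
    simp [intervalIntegral.integral_comp_div (fun s => s ^ (b - 1) * h s) hx.ne', hx.ne']
  rw [setIntegral_indicator measurableSet_Ioc, Set.inter_eq_right.2 Set.Ioc_subset_Ioi_self,
    ← intervalIntegral.integral_of_le hx.le, ← sub_add_cancel b 1, Real.rpow_add_one hx.ne',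
    mul_assoc, sub_add_cancel, h_scale, ← intervalIntegral.integral_const_mul]
  refine intervalIntegral.integral_congr fun u hu => ?_
  rw [Set.uIcc_of_le hx.le] at hu
  have hxb : x ^ (b - 1) ≠ 0 := by positivity
  simp only [Real.div_rpow hu.1 hx.le]
  field_simp

theorem integrableOn_rpow_mul_exp_neg_mul {b c : ℝ} (hb : 0 < b) (hc : 0 < c) :
    IntegrableOn (fun u => u ^ (b - 1) * Real.exp (-(c * u))) (Set.Ioi 0) := by
  simpa using integrableOn_rpow_mul_exp_neg_mul_rpow (s := b - 1) (by linarith) one_pos hc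

theorem tendsto_rpow_mul_integral {b c : ℝ} (hb : 0 < b) (hc : 0 < c) {h : ℕ → ℝ → ℝ}
    {l : ℝ → ℝ} (h_cont : ∀ n, ContinuousOn (h n) (Set.Icc 0 1))
    (h_le : ∀ n, ∀ s ∈ Set.Icc (0 : ℝ) 1, |h n s| ≤ Real.exp (-(c * (n * s))))
    (h_lim : ∀ u > 0, Tendsto (fun n : ℕ => h n (u / n)) atTop (𝓝 (l u))) :
    Tendsto (fun n : ℕ => (n : ℝ) ^ b * ∫ s in (0 : ℝ)..1, s ^ (b - 1) * h n s) atTop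
      (𝓝 (∫ u in Set.Ioi 0, u ^ (b - 1) * l u)) := by
  have h_scale : (fun n : ℕ => (n : ℝ) ^ b * ∫ s in (0 : ℝ)..1, s ^ (b - 1) * h n s) =ᶠ[atTop]
      fun n => ∫ u in Set.Ioi 0,
        (Set.Ioc (0 : ℝ) n).indicator (fun u => u ^ (b - 1) * h n (u / n)) u := by
    filter_upwards [eventually_gt_atTop 0] with n hn
    exact rpow_mul_integral_rpow_mul (by positivity) (h n)
  have h_mem (n : ℕ) (u : ℝ) (hu : u ∈ Set.Ioc (0 : ℝ) n) : u / n ∈ Set.Icc (0 : ℝ) 1 :=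
    ⟨div_nonneg hu.1.le n.cast_nonneg, div_le_one_of_le₀ hu.2 n.cast_nonneg⟩
  refine (tendsto_congr' h_scale).2 <| tendsto_integral_of_dominated_convergence
    (fun u => u ^ (b - 1) * Real.exp (-(c * u))) (fun n => ?_)
    (integrableOn_rpow_mul_exp_neg_mul hb hc) (fun n => ?_) ?_
  · have h_comp : ContinuousOn (fun u => h n (u / n)) (Set.Ioc 0 n) :=
      (h_cont n).comp (by fun_prop) (h_mem n)
    refine AEStronglyMeasurable.restrict ?_
    rw [aestronglyMeasurable_indicator_iff measurableSet_Ioc]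
    exact (Measurable.aestronglyMeasurable (by fun_prop)).mul
      (h_comp.aestronglyMeasurable measurableSet_Ioc)
  · refine ae_restrict_of_forall_mem measurableSet_Ioi fun u (hu : 0 < u) => ?_
    by_cases hun : u ∈ Set.Ioc (0 : ℝ) n
    · have hn : (n : ℝ) ≠ 0 := (hu.trans_le hun.2).ne'
      have h_bound := h_le n _ (h_mem n u hun)
      rw [mul_div_cancel₀ u hn] at h_bound
      rw [Set.indicator_of_mem hun, norm_mul, Real.norm_of_nonneg (by positivity)]
      gcongr
      exact h_bound
    · rw [Set.indicator_of_notMem hun, norm_zero]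
      positivity
  · refine ae_restrict_of_forall_mem measurableSet_Ioi fun u (hu : 0 < u) => ?_
    refine ((h_lim u hu).const_mul (u ^ (b - 1))).congr' ?_
    filter_upwards [eventually_ge_atTop ⌈u⌉₊] with n hn
    have hun : u ∈ Set.Ioc (0 : ℝ) n := ⟨hu, Nat.ceil_le.1 hn⟩
    rw [Set.indicator_of_mem hun]

theorem tendsto_one_sub_div_mul_pow {x : ℕ → ℝ} {y u : ℝ} (hx : Tendsto x atTop (𝓝 y)) :
    Tendsto (fun n : ℕ => (1 - u / n * x n) ^ n) atTop (𝓝 (Real.exp (-(u * y)))) := by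
  simp_rw [sub_eq_add_neg]
  refine Real.tendsto_one_add_pow_exp_of_tendsto ((hx.const_mul u).neg.congr' ?_)
  filter_upwards [eventually_ne_atTop 0] with n hn
  field_simp

theorem one_sub_pow_le_exp_neg_mul {x : ℝ} (hx : x ≤ 1) (n : ℕ) :
    (1 - x) ^ n ≤ Real.exp (-(n * x)) := by
  rw [← mul_neg, Real.exp_nat_mul]
  exact pow_le_pow_left₀ (sub_nonneg.2 hx) (Real.one_sub_le_exp_neg x) n

theorem tendsto_rpow_mul_beta {b : ℝ} (hb : 0 < b) :
    Tendsto (fun n : ℕ => (n : ℝ) ^ b * beta b (n + 2)) atTop (𝓝 (Real.Gamma b)) := by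
  have h_beta (n : ℕ) : beta b (n + 2) =
      ∫ s in (0 : ℝ)..1, s ^ (b - 1) * ((1 - s) * (1 - s) ^ n) := by
    simp_rw [← pow_succ', integral_rpow_mul_one_sub_pow hb]
    push_cast
    ring_nf
  have h_Gamma : ∫ u in Set.Ioi (0 : ℝ), u ^ (b - 1) * Real.exp (-u) = Real.Gamma b := by
    simpa using Real.integral_rpow_mul_exp_neg_mul_Ioi hb one_pos
  simp_rw [h_beta]
  rw [← h_Gamma]
  refine tendsto_rpow_mul_integral hb one_pos (fun n => by fun_prop) (fun n s hs => ?_)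
    fun u _ => ?_
  · have hs1 : 0 ≤ 1 - s := sub_nonneg.2 hs.2
    rw [abs_of_nonneg (by positivity), one_mul]
    exact (mul_le_of_le_one_left (by positivity) (by linarith [hs.1])).trans
      (one_sub_pow_le_exp_neg_mul hs.2 n)
  · simpa using ((tendsto_const_div_atTop_nhds_zero_nat u).const_sub 1).mul
      (tendsto_one_sub_div_mul_pow (u := u) (tendsto_const_nhds (x := (1 : ℝ))))

theorem integrable_prod_rpow_mul_exp_neg_mul {b m : ℝ} (hb : 0 < b) (x y : ℝ) {q : ℝ → ℝ}
    (hq : Continuous q) (hm : 0 < m) (hmq : ∀ θ, m ≤ q θ) :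
    Integrable (fun p : ℝ × ℝ => p.2 ^ (b - 1) * Real.exp (-(p.2 * q p.1)))
      ((volume.restrict (Ι x y)).prod (volume.restrict (Set.Ioi 0))) := by
  have h_const : IntervalIntegrable (fun _ => (1 : ℝ)) volume x y := intervalIntegrable_const
  have h_dom := h_const.def'.mul_prod (integrableOn_rpow_mul_exp_neg_mul hb hm)
  refine h_dom.mono' (Measurable.aestronglyMeasurable (by fun_prop)) ?_
  rw [Measure.prod_restrict]
  refine ae_restrict_of_forall_mem (measurableSet_uIoc.prod measurableSet_Ioi) fun p hp => ?_
  have hp2 : 0 < p.2 := hp.2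
  rw [Real.norm_of_nonneg (by positivity), one_mul, mul_comm m]
  gcongr
  exact hmq p.1

theorem exists_pos_forall_le_of_continuousOn_sphere {c : ℂ} {R : ℝ} {q : ℂ → ℝ}
    (hq : ContinuousOn q (sphere c |R|)) (hq_pos : ∀ z ∈ sphere c |R|, 0 < q z) :
    ∃ m > 0, ∀ z ∈ sphere c |R|, m ≤ q z := by
  obtain ⟨z₀, hz₀, h_min⟩ := (isCompact_sphere c |R|).exists_isMinOn
    ((NormedSpace.sphere_nonempty).2 (abs_nonneg R)) hq
  exact ⟨q z₀, hq_pos z₀ hz₀, fun z hz => h_min hz⟩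

theorem integral_rpow_mul_circleAverage_exp {b : ℝ} (hb : 0 < b) {c : ℂ} {R : ℝ} {q : ℂ → ℝ}
    (hq : ContinuousOn q (sphere c |R|)) (hq_pos : ∀ z ∈ sphere c |R|, 0 < q z) :
    ∫ u in Set.Ioi 0, u ^ (b - 1) * Real.circleAverage (fun z => Real.exp (-(u * q z))) c R =
      Real.Gamma b * Real.circleAverage (fun z => q z ^ (-b)) c R := by
  have h_mem (θ : ℝ) : circleMap c R θ ∈ sphere c |R| := circleMap_mem_sphere' c R θ
  have hq_circle : Continuous fun θ => q (circleMap c R θ) :=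
    hq.comp_continuous (continuous_circleMap c R) h_mem
  obtain ⟨m, hm, hmq⟩ := exists_pos_forall_le_of_continuousOn_sphere hq hq_pos
  have h_int := integrable_prod_rpow_mul_exp_neg_mul hb 0 (2 * π) hq_circle hm
    fun θ => hmq _ (h_mem θ)
  have h_Gamma (θ : ℝ) : ∫ u in Set.Ioi 0, u ^ (b - 1) *
      Real.exp (-(u * q (circleMap c R θ))) = Real.Gamma b * q (circleMap c R θ) ^ (-b) := by
    have hq0 := hq_pos _ (h_mem θ)
    simp_rw [mul_comm _ (q (circleMap c R θ)), Real.integral_rpow_mul_exp_neg_mul_Ioi hb hq0,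
      one_div, Real.inv_rpow hq0.le, ← Real.rpow_neg hq0.le, mul_comm]
  have h_swap := intervalIntegral_integral_swap (f := fun θ u => u ^ (b - 1) *
    Real.exp (-(u * q (circleMap c R θ)))) h_int
  simp only [h_Gamma, intervalIntegral.integral_const_mul] at h_swap
  simp only [Real.circleAverage, smul_eq_mul, mul_left_comm _ (2 * π)⁻¹, integral_const_mul,
    ← h_swap]

open ComplexConjugate

/-- The modulus `|φ_w'(z)|` of the derivative of the disk automorphism `φ_w = mobius w`, for
`‖w‖ < 1`; on the unit circle it is the Poisson kernel of the point `w`. -/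
def mobiusDerivNorm (w z : ℂ) : ℝ := (1 - ‖w‖ ^ 2) / ‖1 - conj w * z‖ ^ 2

theorem one_sub_norm_sq_pos {w : ℂ} (hw : ‖w‖ < 1) : 0 < 1 - ‖w‖ ^ 2 :=
  sub_pos.2 (pow_lt_one₀ (norm_nonneg w) hw two_ne_zero)

section Mobius

variable {w z : ℂ}

theorem one_sub_conj_mul_mem_slitPlane (hw : ‖w‖ < 1) (hz : ‖z‖ ≤ 1) :
    1 - conj w * z ∈ slitPlane := by
  have h_norm : ‖-(conj w * z)‖ < 1 := by
    rw [norm_neg, norm_mul, Complex.norm_conj]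
    exact mul_lt_one_of_nonneg_of_lt_one_left (norm_nonneg w) hw hz
  simpa [sub_eq_add_neg] using Complex.mem_slitPlane_of_norm_lt_one h_norm

theorem one_sub_conj_mul_ne_zero (hw : ‖w‖ < 1) (hz : ‖z‖ ≤ 1) : 1 - conj w * z ≠ 0 :=
  slitPlane_ne_zero (one_sub_conj_mul_mem_slitPlane hw hz)

theorem mobiusDerivNorm_pos (hw : ‖w‖ < 1) (hz : ‖z‖ ≤ 1) : 0 < mobiusDerivNorm w z := by
  have h_denom : 0 < ‖1 - conj w * z‖ := norm_pos_iff.2 (one_sub_conj_mul_ne_zero hw hz)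
  have h_num := one_sub_norm_sq_pos hw
  unfold mobiusDerivNorm
  positivity

theorem continuousOn_mobiusDerivNorm (hw : ‖w‖ < 1) :
    ContinuousOn (mobiusDerivNorm w) (closedBall 0 1) := by
  refine continuousOn_const.div (by fun_prop) fun z hz => pow_ne_zero 2 (norm_ne_zero_iff.2 ?_)
  exact one_sub_conj_mul_ne_zero hw (mem_closedBall_zero_iff.1 hz)

theorem one_sub_norm_div_one_add_norm_le_mobiusDerivNorm (hw : ‖w‖ < 1) (hz : ‖z‖ ≤ 1) :
    (1 - ‖w‖) / (1 + ‖w‖) ≤ mobiusDerivNorm w z := by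
  have h_denom : ‖1 - conj w * z‖ ≤ 1 + ‖w‖ :=
    calc ‖1 - conj w * z‖ ≤ ‖(1 : ℂ)‖ + ‖conj w * z‖ := norm_sub_le _ _
      _ ≤ 1 + ‖w‖ := by
        rw [norm_one, norm_mul, Complex.norm_conj]
        gcongr
        exact mul_le_of_le_one_right (norm_nonneg w) hz
  have h_denom_pos : 0 < ‖1 - conj w * z‖ := norm_pos_iff.2 (one_sub_conj_mul_ne_zero hw hz)
  have h_num := one_sub_norm_sq_pos hw
  calc (1 - ‖w‖) / (1 + ‖w‖) = (1 - ‖w‖ ^ 2) / (1 + ‖w‖) ^ 2 := by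
        field_simp
        ring
    _ ≤ mobiusDerivNorm w z := by
        unfold mobiusDerivNorm
        gcongr

theorem norm_one_sub_conj_mul_sq_sub_norm_sub_sq (w z : ℂ) :
    ‖1 - conj w * z‖ ^ 2 - ‖w - z‖ ^ 2 = (1 - ‖w‖ ^ 2) * (1 - ‖z‖ ^ 2) := by
  simp only [Complex.sq_norm, Complex.normSq_apply, sub_re, sub_im, mul_re, mul_im, conj_re,
    conj_im, one_re, one_im]
  ring

theorem one_sub_norm_mobius_sq (hw : ‖w‖ < 1) (hz : ‖z‖ ≤ 1) :
    1 - ‖mobius w z‖ ^ 2 = (1 - ‖z‖ ^ 2) * mobiusDerivNorm w z := by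
  have h_denom : ‖1 - conj w * z‖ ^ 2 ≠ 0 :=
    pow_ne_zero 2 (norm_ne_zero_iff.2 (one_sub_conj_mul_ne_zero hw hz))
  rw [mobius, mobiusDerivNorm, norm_div, div_pow, one_sub_div h_denom,
    norm_one_sub_conj_mul_sq_sub_norm_sub_sq, mul_div_assoc', mul_comm (1 - ‖w‖ ^ 2)]

theorem norm_mobius_le_one (hw : ‖w‖ < 1) (hz : ‖z‖ ≤ 1) : ‖mobius w z‖ ≤ 1 := by
  have h_nonneg : 0 ≤ 1 - ‖mobius w z‖ ^ 2 := by
    rw [one_sub_norm_mobius_sq hw hz]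
    exact mul_nonneg (sub_nonneg.2 (pow_le_one₀ (norm_nonneg z) hz))
      (mobiusDerivNorm_pos hw hz).le
  exact (sq_le_one_iff₀ (norm_nonneg _)).1 (sub_nonneg.1 h_nonneg)

theorem one_sub_conj_mul_mobius (hw : ‖w‖ < 1) (hz : ‖z‖ ≤ 1) :
    1 - conj w * mobius w z = ((1 - ‖w‖ ^ 2 : ℝ) : ℂ) / (1 - conj w * z) := by
  have h_denom := one_sub_conj_mul_ne_zero hw hz
  rw [mobius]
  push_cast
  rw [← Complex.conj_mul']
  field_simp
  ring

theorem mobiusDerivNorm_mobius (hw : ‖w‖ < 1) (hz : ‖z‖ ≤ 1) :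
    mobiusDerivNorm w (mobius w z) = (mobiusDerivNorm w z)⁻¹ := by
  have h_num := one_sub_norm_sq_pos hw
  have h_denom : ‖1 - conj w * z‖ ≠ 0 := norm_ne_zero_iff.2 (one_sub_conj_mul_ne_zero hw hz)
  rw [mobiusDerivNorm, mobiusDerivNorm, one_sub_conj_mul_mobius hw hz, norm_div,
    Complex.norm_of_nonneg h_num.le]
  field_simp

theorem isOpen_setOf_one_sub_conj_mul_mem_slitPlane (w : ℂ) :
    IsOpen {z | 1 - conj w * z ∈ slitPlane} :=
  isOpen_slitPlane.preimage (by fun_prop)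

theorem closedBall_subset_setOf_one_sub_conj_mul_mem_slitPlane (hw : ‖w‖ < 1) :
    closedBall 0 1 ⊆ {z | 1 - conj w * z ∈ slitPlane} := fun _ hz =>
  one_sub_conj_mul_mem_slitPlane hw (mem_closedBall_zero_iff.1 hz)

theorem analyticOnClosedDisk_mobius_pow (hw : ‖w‖ < 1) (n : ℕ) :
    AnalyticOnClosedDisk fun z => mobius w z ^ n := by
  refine ⟨_, isOpen_setOf_one_sub_conj_mul_mem_slitPlane w,
    closedBall_subset_setOf_one_sub_conj_mul_mem_slitPlane hw, fun z hz => ?_⟩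
  unfold mobius
  have h_denom : 1 - conj w * z ≠ 0 := slitPlane_ne_zero hz
  fun_prop (disch := assumption)

theorem continuousOn_mobius (hw : ‖w‖ < 1) : ContinuousOn (mobius w) (closedBall 0 1) := by
  unfold mobius
  exact ContinuousOn.div (by fun_prop) (by fun_prop) fun z hz =>
    one_sub_conj_mul_ne_zero hw (mem_closedBall_zero_iff.1 hz)

theorem analyticOnClosedDisk_const_mul_one_sub_conj_mul_cpow (hw : ‖w‖ < 1) (a c : ℂ) :
    AnalyticOnClosedDisk fun z => a * (1 - conj w * z) ^ c := by
  refine ⟨_, isOpen_setOf_one_sub_conj_mul_mem_slitPlane w,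
    closedBall_subset_setOf_one_sub_conj_mul_mem_slitPlane hw, fun z hz => ?_⟩
  fun_prop (disch := assumption)

theorem norm_rpow_mul_cpow_sq (hw : ‖w‖ < 1) (hz : ‖z‖ ≤ 1) (a : ℝ) :
    ‖(((1 - ‖w‖ ^ 2) ^ a : ℝ) : ℂ) * (1 - conj w * z) ^ ((-(2 * a) : ℝ) : ℂ)‖ ^ 2 =
      mobiusDerivNorm w z ^ (2 * a) := by
  have h_num := one_sub_norm_sq_pos hw
  have h_denom := one_sub_conj_mul_ne_zero hw hz
  rw [norm_mul, Complex.norm_of_nonneg (by positivity), Complex.norm_cpow_real, mobiusDerivNorm,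
    Real.div_rpow h_num.le (by positivity), mul_pow, ← Real.rpow_mul_natCast h_num.le,
    ← Real.rpow_mul_natCast (norm_nonneg _), ← Real.rpow_natCast_mul (norm_nonneg _),
    div_eq_mul_inv, ← Real.rpow_neg (norm_nonneg _)]
  congr 2 <;> push_cast <;> ring

end Mobius

theorem hardyNormSq_mobiusDeriv_rpow {w : ℂ} (hw : ‖w‖ < 1) (a : ℝ) :
    hardyNormSq (fun z =>
        (((1 - ‖w‖ ^ 2) ^ a : ℝ) : ℂ) * (1 - conj w * z) ^ ((-(2 * a) : ℝ) : ℂ)) =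
      Real.circleAverage (fun z => mobiusDerivNorm w z ^ (2 * a)) 0 1 := by
  rw [(analyticOnClosedDisk_const_mul_one_sub_conj_mul_cpow hw _ _).hardyNormSq_eq_circleAverage]
  refine Real.circleAverage_congr_sphere fun z hz => ?_
  rw [abs_one, mem_sphere_zero_iff_norm] at hz
  exact norm_rpow_mul_cpow_sq hw hz.le a

/-- A lift of the circle map `mobius w` to the real line of angles: if `z = exp (iθ)` and
`v = 1 - conj w * z`, then `mobius w z = -z * (conj v / v)`, and `conj v / v = exp (-2i arg v)`. -/
def mobiusLift (w : ℂ) (θ : ℝ) : ℝ := π + θ - 2 * arg (1 - conj w * circleMap 0 1 θ)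

theorem exp_neg_two_mul_arg_mul_I {v : ℂ} (hv : v ≠ 0) :
    Complex.exp (-(2 * arg v) * I) = conj v / v := by
  have h_norm : (‖v‖ : ℂ) ≠ 0 := by exact_mod_cast norm_ne_zero_iff.2 hv
  have h_exp : Complex.exp (arg v * I) = v / ‖v‖ := by
    rw [eq_div_iff h_norm, mul_comm, Complex.norm_mul_exp_arg_mul_I]
  rw [neg_mul, Complex.exp_neg, mul_assoc, two_mul, Complex.exp_add, h_exp]
  field_simp
  rw [← Complex.conj_mul', mul_comm]

section MobiusLift

variable {w : ℂ}

theorem circleMap_mobiusLift (hw : ‖w‖ < 1) (θ : ℝ) :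
    circleMap 0 1 (mobiusLift w θ) = mobius w (circleMap 0 1 θ) := by
  set z := circleMap 0 1 θ with hz
  have hz_norm : ‖z‖ = 1 := by simp [hz]
  have h_denom := one_sub_conj_mul_ne_zero hw hz_norm.le
  have hz_conj : z * conj z = 1 := by rw [Complex.mul_conj', hz_norm]; simp
  have h_split : ((mobiusLift w θ : ℝ) : ℂ) * I =
      π * I + θ * I + -(2 * arg (1 - conj w * z)) * I := by
    rw [mobiusLift, ← hz]
    push_cast
    ring
  have hz_exp : Complex.exp (θ * I) = z := by simp [hz, circleMap]
  rw [circleMap_zero, h_split, Complex.exp_add, Complex.exp_add, Complex.exp_pi_mul_I,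
    exp_neg_two_mul_arg_mul_I h_denom, hz_exp, mobius, ofReal_one,
    one_mul, mul_div_assoc', div_left_inj' h_denom, map_sub, map_one, map_mul, Complex.conj_conj]
  linear_combination w * hz_conj

theorem two_mul_re_inv_sub_one {v : ℂ} (hv : v ≠ 0) :
    2 * (v⁻¹).re - 1 = (1 - ‖1 - v‖ ^ 2) / ‖v‖ ^ 2 := by
  have h_norm : normSq v ≠ 0 := Complex.normSq_eq_zero.not.2 hv
  rw [Complex.inv_re, Complex.sq_norm, Complex.sq_norm]
  field_simp
  simp only [Complex.normSq_apply, sub_re, sub_im, one_re, one_im]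
  ring

theorem hasDerivAt_arg_one_sub_conj_mul_circleMap (hw : ‖w‖ < 1) (θ : ℝ) :
    HasDerivAt (fun θ => arg (1 - conj w * circleMap 0 1 θ))
      (1 - ((1 - conj w * circleMap 0 1 θ)⁻¹).re) θ := by
  have h_slit : 1 - conj w * circleMap 0 1 θ ∈ slitPlane :=
    one_sub_conj_mul_mem_slitPlane hw (by simp)
  have h_denom := slitPlane_ne_zero h_slit
  have h_quot : -(conj w * (circleMap 0 1 θ * I)) / (1 - conj w * circleMap 0 1 θ) =
      (1 - (1 - conj w * circleMap 0 1 θ)⁻¹) * I := by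
    field_simp
    ring
  have h_log := (((hasDerivAt_circleMap 0 1 θ).const_mul (conj w)).const_sub 1).clog_real h_slit
  rw [h_quot] at h_log
  simpa [Function.comp_def, Complex.log_im] using Complex.imCLM.hasFDerivAt.comp_hasDerivAt θ h_log

theorem hasDerivAt_mobiusLift (hw : ‖w‖ < 1) (θ : ℝ) :
    HasDerivAt (mobiusLift w) (mobiusDerivNorm w (circleMap 0 1 θ)) θ := by
  have hz_norm : ‖circleMap 0 1 θ‖ = 1 := by simp
  have h_re := two_mul_re_inv_sub_one (one_sub_conj_mul_ne_zero hw hz_norm.le)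
  rw [sub_sub_cancel, norm_mul, Complex.norm_conj, hz_norm, mul_one] at h_re
  have h_deriv := ((hasDerivAt_id' θ).const_add π).sub
    ((hasDerivAt_arg_one_sub_conj_mul_circleMap hw θ).const_mul 2)
  refine h_deriv.congr_deriv ?_
  rw [mobiusDerivNorm, ← h_re]
  ring

theorem mobiusLift_two_pi (w : ℂ) : mobiusLift w (2 * π) = mobiusLift w 0 + 2 * π := by
  have h_period := periodic_circleMap 0 1 0
  rw [zero_add] at h_period
  rw [mobiusLift, mobiusLift, h_period]
  ring

theorem continuous_mobiusDerivNorm_circleMap (hw : ‖w‖ < 1) :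
    Continuous fun θ => mobiusDerivNorm w (circleMap 0 1 θ) :=
  (continuousOn_mobiusDerivNorm hw).comp_continuous (continuous_circleMap 0 1) fun θ => by simp

theorem circleAverage_mobius_mul_mobiusDerivNorm (hw : ‖w‖ < 1) {g : ℂ → ℝ}
    (hg : ContinuousOn g (sphere 0 1)) :
    Real.circleAverage (fun z => g (mobius w z) * mobiusDerivNorm w z) 0 1 =
      Real.circleAverage g 0 1 := by
  have hg_circle : Continuous (g ∘ circleMap 0 1) :=
    hg.comp_continuous (continuous_circleMap 0 1) fun θ => by simp
  have h_subst := intervalIntegral.integral_comp_mul_deriv (a := 0) (b := 2 * π)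
    (fun θ _ => hasDerivAt_mobiusLift hw θ)
    (continuous_mobiusDerivNorm_circleMap hw).continuousOn hg_circle
  simp only [Function.comp_apply, circleMap_mobiusLift hw, mobiusLift_two_pi] at h_subst
  have h_periodic : Function.Periodic (g ∘ circleMap 0 1) (2 * π) :=
    (periodic_circleMap 0 1).comp g
  rw [Real.circleAverage, Real.circleAverage, h_subst]
  congr 1
  simpa using h_periodic.intervalIntegral_add_eq (mobiusLift w 0) 0

theorem circleAverage_mobiusDerivNorm (hw : ‖w‖ < 1) :
    Real.circleAverage (mobiusDerivNorm w) 0 1 = 1 := by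
  simpa [Real.circleAverage_const] using
    circleAverage_mobius_mul_mobiusDerivNorm hw (g := fun _ => 1) continuousOn_const

theorem continuousOn_mobiusDerivNorm_rpow (hw : ‖w‖ < 1) (b : ℝ) :
    ContinuousOn (fun z => mobiusDerivNorm w z ^ b) (sphere 0 1) :=
  ((continuousOn_mobiusDerivNorm hw).mono sphere_subset_closedBall).rpow_const fun _ hz =>
    .inl (mobiusDerivNorm_pos hw (mem_sphere_zero_iff_norm.1 hz).le).ne'

theorem circleAverage_mobiusDerivNorm_rpow_neg (hw : ‖w‖ < 1) (b : ℝ) :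
    Real.circleAverage (fun z => mobiusDerivNorm w z ^ (-b)) 0 1 =
      Real.circleAverage (fun z => mobiusDerivNorm w z ^ (b + 1)) 0 1 := by
  rw [← circleAverage_mobius_mul_mobiusDerivNorm hw (continuousOn_mobiusDerivNorm_rpow hw (-b))]
  refine Real.circleAverage_congr_sphere fun z hz => ?_
  rw [abs_one, mem_sphere_zero_iff_norm] at hz
  have h_pos := mobiusDerivNorm_pos hw hz.le
  simp only [mobiusDerivNorm_mobius hw hz.le]
  rw [Real.inv_rpow h_pos.le, Real.rpow_neg h_pos.le, inv_inv, Real.rpow_add_one h_pos.ne']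

end MobiusLift

theorem rpow_add_sub_one_le_rpow_mul {x b : ℝ} (hx : 0 < x) (hb : 0 ≤ b) :
    x ^ b + (x - 1) ≤ x ^ b * x := by
  have h_nonneg : 0 ≤ (x ^ b - 1) * (x - 1) := by
    rcases le_total 1 x with h | h
    · exact mul_nonneg (sub_nonneg.2 (Real.one_le_rpow h hb)) (sub_nonneg.2 h)
    · exact mul_nonneg_of_nonpos_of_nonpos (sub_nonpos.2 (Real.rpow_le_one hx.le h hb))
        (sub_nonpos.2 h)
  linarith

theorem rpow_add_sub_one_lt_rpow_mul {x b : ℝ} (hx : 1 < x) (hb : 0 < b) :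
    x ^ b + (x - 1) < x ^ b * x := by
  nlinarith [mul_pos (sub_pos.2 (Real.one_lt_rpow hx hb)) (sub_pos.2 hx)]

theorem mobiusDerivNorm_div_norm (w : ℂ) :
    mobiusDerivNorm w (w / ‖w‖) = (1 - ‖w‖ ^ 2) / (1 - ‖w‖) ^ 2 := by
  have h_denom : 1 - conj w * (w / ‖w‖) = ((1 - ‖w‖ : ℝ) : ℂ) := by
    rw [mul_div_assoc', Complex.conj_mul']
    push_cast
    field_simp
  rw [mobiusDerivNorm, h_denom, Complex.norm_real, Real.norm_eq_abs, sq_abs]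

theorem one_lt_mobiusDerivNorm_div_norm {w : ℂ} (hw0 : w ≠ 0) (hw : ‖w‖ < 1) :
    1 < mobiusDerivNorm w (w / ‖w‖) := by
  have h_pos : 0 < ‖w‖ := norm_pos_iff.2 hw0
  rw [mobiusDerivNorm_div_norm, one_lt_div (by nlinarith)]
  nlinarith

theorem circleAverage_lt_circleAverage {c : ℂ} {R : ℝ} {f g : ℂ → ℝ}
    (hf : ContinuousOn f (sphere c |R|)) (hg : ContinuousOn g (sphere c |R|))
    (h_le : ∀ z ∈ sphere c |R|, f z ≤ g z) (h_lt : ∃ z ∈ sphere c |R|, f z < g z) :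
    Real.circleAverage f c R < Real.circleAverage g c R := by
  have h_mem (θ : ℝ) : circleMap c R θ ∈ sphere c |R| := circleMap_mem_sphere' c R θ
  obtain ⟨z, hz, hz_lt⟩ := h_lt
  rw [← image_circleMap_Ioc] at hz
  obtain ⟨θ, hθ, rfl⟩ := hz
  have h_integral := intervalIntegral.integral_lt_integral_of_continuousOn_of_le_of_exists_lt
    Real.two_pi_pos (hf.comp_continuous (continuous_circleMap c R) h_mem).continuousOn
    (hg.comp_continuous (continuous_circleMap c R) h_mem).continuousOn
    (fun θ _ => h_le _ (h_mem θ)) ⟨θ, Set.Ioc_subset_Icc_self hθ, hz_lt⟩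
  exact mul_lt_mul_of_pos_left h_integral (inv_pos.2 Real.two_pi_pos)

theorem circleAverage_mobiusDerivNorm_rpow_lt {w : ℂ} (hw0 : w ≠ 0) (hw : ‖w‖ < 1) {b : ℝ}
    (hb : 0 < b) :
    Real.circleAverage (fun z => mobiusDerivNorm w z ^ b) 0 1 <
      Real.circleAverage (fun z => mobiusDerivNorm w z ^ (b + 1)) 0 1 := by
  have h_pos (z : ℂ) (hz : z ∈ sphere (0 : ℂ) |1|) : 0 < mobiusDerivNorm w z :=
    mobiusDerivNorm_pos hw (by simpa using (mem_sphere_zero_iff_norm.1 hz).le)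
  have h_cont : ContinuousOn (mobiusDerivNorm w) (sphere 0 |1|) :=
    (continuousOn_mobiusDerivNorm hw).mono (by simpa using sphere_subset_closedBall)
  have h_cont_rpow (a : ℝ) : ContinuousOn (fun z => mobiusDerivNorm w z ^ a) (sphere 0 |1|) := by
    simpa using continuousOn_mobiusDerivNorm_rpow hw a
  have h_cont_sub : ContinuousOn (fun z => mobiusDerivNorm w z - 1) (sphere 0 |1|) :=
    h_cont.sub continuousOn_const
  calc Real.circleAverage (fun z => mobiusDerivNorm w z ^ b) 0 1
      = Real.circleAverage (fun z => mobiusDerivNorm w z ^ b + (mobiusDerivNorm w z - 1)) 0 1 := by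
        rw [Real.circleAverage_fun_add (h_cont_rpow b).circleIntegrable'
            h_cont_sub.circleIntegrable',
          Real.circleAverage_fun_sub h_cont.circleIntegrable' (circleIntegrable_const 1 0 1),
          circleAverage_mobiusDerivNorm hw, Real.circleAverage_const, sub_self, add_zero]
    _ < Real.circleAverage (fun z => mobiusDerivNorm w z ^ (b + 1)) 0 1 := by
        refine circleAverage_lt_circleAverage ((h_cont_rpow b).add h_cont_sub)
          (h_cont_rpow (b + 1)) (fun z hz => ?_) ⟨w / ‖w‖, by simp [hw0], ?_⟩
        · rw [Real.rpow_add_one (h_pos z hz).ne']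
          exact rpow_add_sub_one_le_rpow_mul (h_pos z hz) hb.le
        · have h_one_lt := one_lt_mobiusDerivNorm_div_norm hw0 hw
          rw [Real.rpow_add_one (by positivity)]
          exact rpow_add_sub_one_lt_rpow_mul h_one_lt hb

theorem sqrt_one_sub_mem_Icc {s : ℝ} (hs : 0 ≤ s) : √(1 - s) ∈ Set.Icc 0 1 :=
  ⟨Real.sqrt_nonneg _, Real.sqrt_le_one.2 (by linarith)⟩

section RadialMeans

variable {w : ℂ}

theorem continuousOn_norm_mobius_pow_sq (hw : ‖w‖ < 1) (n : ℕ) :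
    ContinuousOn (fun z => ‖mobius w z ^ n‖ ^ 2) (closedBall 0 1) :=
  (((continuousOn_mobius hw).pow n).norm).pow 2

theorem continuousOn_circleAverage_norm_mobius_pow_sq (hw : ‖w‖ < 1) (n : ℕ) :
    ContinuousOn (Real.circleAverage (fun z => ‖mobius w z ^ n‖ ^ 2) 0) (Set.Icc 0 1) :=
  Real.ContinuousOn.circleAverage
    ((continuousOn_norm_mobius_pow_sq hw n).mono fun z hz => by simpa using hz.2) fun _ hr => hr.1

theorem norm_mobius_pow_sq_eq (hw : ‖w‖ < 1) {z : ℂ} (hz : ‖z‖ ≤ 1) (n : ℕ) :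
    ‖mobius w z ^ n‖ ^ 2 = (1 - (1 - ‖z‖ ^ 2) * mobiusDerivNorm w z) ^ n := by
  rw [← one_sub_norm_mobius_sq hw hz, sub_sub_cancel, norm_pow, ← pow_mul, mul_comm, pow_mul]

theorem norm_mobius_pow_sq_le_exp (hw : ‖w‖ < 1) {z : ℂ} (hz : ‖z‖ ≤ 1) (n : ℕ) :
    ‖mobius w z ^ n‖ ^ 2 ≤
      Real.exp (-((1 - ‖w‖) / (1 + ‖w‖) * (n * (1 - ‖z‖ ^ 2)))) := by
  have h_deriv := one_sub_norm_div_one_add_norm_le_mobiusDerivNorm hw hz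
  have h_norm : 0 ≤ 1 - ‖z‖ ^ 2 := sub_nonneg.2 (pow_le_one₀ (norm_nonneg z) hz)
  have h_mobius : (1 - ‖z‖ ^ 2) * mobiusDerivNorm w z ≤ 1 := by
    linarith [one_sub_norm_mobius_sq hw hz, sq_nonneg ‖mobius w z‖]
  rw [norm_mobius_pow_sq_eq hw hz]
  refine (one_sub_pow_le_exp_neg_mul h_mobius n).trans (Real.exp_le_exp.2 (neg_le_neg ?_))
  calc (1 - ‖w‖) / (1 + ‖w‖) * (n * (1 - ‖z‖ ^ 2))
      ≤ mobiusDerivNorm w z * (n * (1 - ‖z‖ ^ 2)) := by gcongr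
    _ = n * ((1 - ‖z‖ ^ 2) * mobiusDerivNorm w z) := by ring

theorem circleAverage_norm_mobius_pow_sq_le_exp (hw : ‖w‖ < 1) {s : ℝ} (hs : s ∈ Set.Icc 0 1)
    (n : ℕ) : Real.circleAverage (fun z => ‖mobius w z ^ n‖ ^ 2) 0 √(1 - s) ≤
      Real.exp (-((1 - ‖w‖) / (1 + ‖w‖) * (n * s))) := by
  have h_radius := sqrt_one_sub_mem_Icc hs.1
  have h_sphere {z : ℂ} (hz : z ∈ sphere (0 : ℂ) |√(1 - s)|) : ‖z‖ = √(1 - s) := by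
    simpa [abs_of_nonneg h_radius.1] using hz
  refine Real.circleAverage_mono_on_of_le_circle (ContinuousOn.circleIntegrable'
    ((continuousOn_norm_mobius_pow_sq hw n).mono fun z hz => ?_)) fun z hz => ?_
  · simpa [h_sphere hz] using h_radius.2
  · have h_exp := norm_mobius_pow_sq_le_exp hw ((h_sphere hz).trans_le h_radius.2) n
    rwa [h_sphere hz, Real.sq_sqrt (sub_nonneg.2 hs.2), sub_sub_cancel] at h_exp

theorem tendsto_norm_mobius_pow_sq (hw : ‖w‖ < 1) {u : ℝ} (hu : 0 ≤ u) {z : ℂ} (hz : ‖z‖ = 1) :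
    Tendsto (fun n : ℕ => ‖mobius w (√(1 - u / n) * z) ^ n‖ ^ 2) atTop
      (𝓝 (Real.exp (-(u * mobiusDerivNorm w z)))) := by
  have h_radius (n : ℕ) : √(1 - u / n) ∈ Set.Icc 0 1 := sqrt_one_sub_mem_Icc (by positivity)
  have h_norm (n : ℕ) : ‖(√(1 - u / n) : ℂ) * z‖ = √(1 - u / n) := by
    rw [norm_mul, hz, mul_one, Complex.norm_of_nonneg (h_radius n).1]
  have h_div : Tendsto (fun n : ℕ => u / n) atTop (𝓝 0) := tendsto_const_div_atTop_nhds_zero_nat u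
  have h_point : Tendsto (fun n : ℕ => (√(1 - u / n) : ℂ) * z) atTop (𝓝 z) := by
    have h_sqrt := (Complex.continuous_ofReal.tendsto _).comp (h_div.const_sub 1).sqrt
    simpa using h_sqrt.mul_const z
  have h_deriv : Tendsto (fun n : ℕ => mobiusDerivNorm w (√(1 - u / n) * z)) atTop
      (𝓝 (mobiusDerivNorm w z)) :=
    (continuousOn_mobiusDerivNorm hw z (by simp [hz])).tendsto.comp
      (tendsto_nhdsWithin_iff.2 ⟨h_point, .of_forall fun n => by
        simpa only [mem_closedBall_zero_iff, h_norm] using (h_radius n).2⟩)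
  refine (tendsto_one_sub_div_mul_pow h_deriv).congr' ?_
  filter_upwards [h_div.eventually_le_const zero_lt_one] with n hn
  rw [norm_mobius_pow_sq_eq hw ((h_norm n).trans_le (h_radius n).2), h_norm,
    Real.sq_sqrt (sub_nonneg.2 hn), sub_sub_cancel]

theorem tendsto_circleAverage_norm_mobius_pow_sq (hw : ‖w‖ < 1) {u : ℝ} (hu : 0 ≤ u) :
    Tendsto (fun n : ℕ => Real.circleAverage (fun z => ‖mobius w z ^ n‖ ^ 2) 0 √(1 - u / n)) atTop
      (𝓝 (Real.circleAverage (fun z => Real.exp (-(u * mobiusDerivNorm w z))) 0 1)) := by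
  have h_le (n : ℕ) {z : ℂ} (hz : z ∈ sphere (0 : ℂ) |1|) : ‖(√(1 - u / n) : ℂ) * z‖ ≤ 1 := by
    have h_radius : √(1 - u / n) ∈ Set.Icc 0 1 := sqrt_one_sub_mem_Icc (by positivity)
    rw [norm_mul, Complex.norm_of_nonneg h_radius.1, mem_sphere_zero_iff_norm.1 hz, abs_one,
      mul_one]
    exact h_radius.2
  simp_rw [Real.circleAverage_eq_circleAverage_zero_one (R := √_), add_zero]
  refine tendsto_circleAverage_of_norm_le (C := 1)
    (fun n => ContinuousOn.circleIntegrable' ?_) (fun n z hz => ?_)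
    fun z hz => tendsto_norm_mobius_pow_sq hw hu (by simpa using hz)
  · exact (continuousOn_norm_mobius_pow_sq hw n).comp (by fun_prop) fun z hz => by
      simpa only [mem_closedBall_zero_iff] using h_le n hz
  · rw [Real.norm_of_nonneg (by positivity), norm_pow, ← pow_mul]
    exact pow_le_one₀ (norm_nonneg _) (norm_mobius_le_one hw (h_le n hz))

theorem tendsto_rpow_mul_beta_mul_wNormSq_mobius_pow (hw : ‖w‖ < 1) {α : ℝ} (hα : 0 < α) :
    Tendsto (fun n : ℕ => (n : ℝ) ^ (2 * α) *
        (beta (2 * α) 2 * wNormSq (bergBeta α) fun z => mobius w z ^ n)) atTop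
      (𝓝 (Real.Gamma (2 * α) *
        Real.circleAverage (fun z => mobiusDerivNorm w z ^ (2 * α + 1)) 0 1)) := by
  have hb : 0 < 2 * α := by positivity
  have h_cont : ContinuousOn (mobiusDerivNorm w) (sphere 0 |1|) :=
    (continuousOn_mobiusDerivNorm hw).mono (by simpa using sphere_subset_closedBall)
  simp only [(analyticOnClosedDisk_mobius_pow hw _).beta_mul_wNormSq_bergBeta hα]
  rw [← circleAverage_mobiusDerivNorm_rpow_neg hw, ← integral_rpow_mul_circleAverage_exp hb h_cont
    fun z hz => mobiusDerivNorm_pos hw (by simpa using hz.le)]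
  refine tendsto_rpow_mul_integral (c := (1 - ‖w‖) / (1 + ‖w‖)) hb
    (div_pos (sub_pos.2 hw) (by positivity)) (fun n => ?_) (fun n s hs => ?_) fun u hu => ?_
  · exact ContinuousOn.mul (by fun_prop) ((continuousOn_circleAverage_norm_mobius_pow_sq hw n).comp
      (by fun_prop) fun s hs => sqrt_one_sub_mem_Icc hs.1)
  · have h_mean : 0 ≤ Real.circleAverage (fun z => ‖mobius w z ^ n‖ ^ 2) 0 √(1 - s) :=
      Real.circleAverage_nonneg_of_nonneg fun z _ => by positivity
    rw [abs_of_nonneg (mul_nonneg (sub_nonneg.2 hs.2) h_mean)]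
    exact (mul_le_of_le_one_left h_mean (by linarith [hs.1])).trans
      (circleAverage_norm_mobius_pow_sq_le_exp hw hs n)
  · simpa using ((tendsto_const_div_atTop_nhds_zero_nat u).const_sub 1).mul
      (tendsto_circleAverage_norm_mobius_pow_sq hw hu.le)

theorem tendsto_wNormSq_mobius_pow_div_bergBeta_sq (hw : ‖w‖ < 1) {α : ℝ} (hα : 0 < α) :
    Tendsto (fun n => (wNormSq (bergBeta α) fun z => mobius w z ^ n) / bergBeta α n ^ 2) atTop
      (𝓝 (Real.circleAverage (fun z => mobiusDerivNorm w z ^ (2 * α + 1)) 0 1)) := by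
  have hb : 0 < 2 * α := by positivity
  have h_Gamma := Real.Gamma_pos_of_pos hb
  have h_lim := (tendsto_rpow_mul_beta_mul_wNormSq_mobius_pow hw hα).div (tendsto_rpow_mul_beta hb)
    h_Gamma.ne'
  rw [mul_div_cancel_left₀ _ h_Gamma.ne'] at h_lim
  refine h_lim.congr' ?_
  filter_upwards [eventually_ne_atTop 0] with n hn
  have h_pow : (n : ℝ) ^ (2 * α) ≠ 0 := by positivity
  have h_beta := (beta_pos hb zero_lt_two).ne'
  rw [Pi.div_apply, ← bergBeta_sq_mul_beta hα, mul_div_mul_left _ _ h_pow,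
    mul_comm (bergBeta α n ^ 2), mul_div_mul_left _ _ h_beta]

end RadialMeans

theorem statement15_general {w : ℂ} (hw0 : w ≠ 0) (hw : ‖w‖ < 1) {α : ℝ} (hα : 0 < α) :
    ∀ᶠ n in atTop,
      √(hardyNormSq fun z =>
          (((1 - ‖w‖ ^ 2) ^ α : ℝ) : ℂ) * (1 - conj w * z) ^ ((-(2 * α) : ℝ) : ℂ)) <
        √(wNormSq (bergBeta α) fun z => mobius w z ^ n) / bergBeta α n := by
  rw [hardyNormSq_mobiusDeriv_rpow hw]
  have h_lt := circleAverage_mobiusDerivNorm_rpow_lt hw0 hw (b := 2 * α) (by positivity)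
  filter_upwards [(tendsto_wNormSq_mobius_pow_div_bergBeta_sq hw hα).eventually_const_lt h_lt]
    with n hn
  have h_nonneg : 0 ≤ Real.circleAverage (fun z => mobiusDerivNorm w z ^ (2 * α)) 0 1 :=
    Real.circleAverage_nonneg_of_nonneg fun z hz =>
      Real.rpow_nonneg (mobiusDerivNorm_pos hw (by simpa using hz.le)).le _
  simpa only [Real.sqrt_div' _ (sq_nonneg _), Real.sqrt_sq (bergBeta_pos hα.le n).le] using
    Real.sqrt_lt_sqrt h_nonneg hn

/-- For `t ∈ (0,1)` and `α ≥ 1/2`, for all sufficiently large `n`,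
`‖φ_t^n‖_{A²_α}/‖z^n‖_{A²_α} ≥ (1/2)‖(φ_t')^α‖_{H²}`. -/
theorem statement15 (t α : ℝ) (ht : t ∈ Set.Ioo (0:ℝ) 1) (hα : 1/2 ≤ α) :
    ∃ N : ℕ, ∀ n : ℕ, N ≤ n →
      (1/2) * Real.sqrt (hardyNormSq fun z =>
          (((1 - t ^ 2) ^ α : ℝ) : ℂ) * (1 - (t : ℂ) * z) ^ ((-(2 * α) : ℝ) : ℂ)) ≤
        Real.sqrt (wNormSq (bergBeta α) fun z => mobius (t : ℂ) z ^ n) / bergBeta α n := by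
  have h_norm : ‖(t : ℂ)‖ = t := Complex.norm_of_nonneg ht.1.le
  obtain ⟨N, hN⟩ := eventually_atTop.1 <| statement15_general (w := t) (α := α)
    (Complex.ofReal_ne_zero.2 ht.1.ne') (h_norm.trans_lt ht.2) (by linarith)
  simp only [h_norm, Complex.conj_ofReal] at hN
  exact ⟨N, fun n hn => (mul_le_of_le_one_left (Real.sqrt_nonneg _) (by norm_num)).trans
    (hN n hn).le⟩
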